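/- arXiv:1703.04806 — 2 statements merged into one kernel-verified Lean document; each statement's English description precedes it below -/
import Mathlib

section
/- Let T₁ = (S₁,Σ₁,κ₁) and T₂ = (S₂,Σ₂,κ₂) be STSs, α : S₁ → S₂ measurable with T₂ an α-abstraction of T₁, and μ a probability measure on S₁. If T₂ is decisive from α_# μ w.r.t. every B ∈ Σ₂ (i.e. Prob^{T₂}_{α_# μ}(F B ∪ F B̃) = 1 for every B ∈ Σ₂), then T₂ is a μ-complete α-abstraction of T₁: for every B ∈ Σ₂, Prob^{T₁}_μ(F α⁻¹(B)) = 1 implies Prob^{T₂}_{α_# μ}(F B) = 1. -/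
open MeasureTheory ProbabilityTheory ENNReal Filter Topology

namespace STS

variable {S : Type*} [MeasurableSpace S]

/-- Probability of the cylinder `Cyl(A 0, …, A n)` for the Markov chain with kernel `κ`
and initial distribution `μ`. -/
noncomputable def cylProb (κ : Kernel S S) : ℕ → Measure S → (ℕ → Set S) → ℝ≥0∞
  | 0, μ, A => μ (A 0)
  | n + 1, μ, A => ∫⁻ s in A 0, cylProb κ n (κ s) (fun i => A (i + 1)) ∂μ

/-- `P` assigns to each initial (probability) distribution the path measure (on `ℕ → S`,
with the product σ-algebra) of the time-homogeneous Markov chain with transition kernel `κ`,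
as given by the Ionescu–Tulcea construction: it is the unique probability measure giving
cylinders their prescribed probabilities. -/
def IsPathMeasure (κ : Kernel S S) (P : Measure S → Measure (ℕ → S)) : Prop :=
  ∀ μ : Measure S, IsProbabilityMeasure μ →
    IsProbabilityMeasure (P μ) ∧
    ∀ (n : ℕ) (A : ℕ → Set S), (∀ i, MeasurableSet (A i)) →
      P μ {ρ | ∀ i ≤ n, ρ i ∈ A i} = cylProb κ n μ A

/-- The path event `F B`: eventually reach `B`. -/
def evF (B : Set S) : Set (ℕ → S) := {ρ | ∃ k, ρ k ∈ B}

/-- The path event `F≤n B`. -/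
def evFle (n : ℕ) (B : Set S) : Set (ℕ → S) := {ρ | ∃ k ≤ n, ρ k ∈ B}

/-- The path event `F≥p B`. -/
def evFge (p : ℕ) (B : Set S) : Set (ℕ → S) := {ρ | ∃ k, p ≤ k ∧ ρ k ∈ B}

/-- The path event `GF B`: visit `B` infinitely often. -/
def evGF (B : Set S) : Set (ℕ → S) := {ρ | ∀ n, ∃ k, n ≤ k ∧ ρ k ∈ B}

/-- The path event `FG B`: eventually stay in `B` forever. -/
def evFG (B : Set S) : Set (ℕ → S) := {ρ | ∃ n, ∀ k, n ≤ k → ρ k ∈ B}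

/-- The until event `B' U B`. -/
def evU (B' B : Set S) : Set (ℕ → S) := {ρ | ∃ k, ρ k ∈ B ∧ ∀ j < k, ρ j ∈ B'}

/-- The bounded until event `B' U≤n B`. -/
def evUle (n : ℕ) (B' B : Set S) : Set (ℕ → S) := {ρ | ∃ k ≤ n, ρ k ∈ B ∧ ∀ j < k, ρ j ∈ B'}

/-- The avoid-set `B̃` of `B`: states from which `B` is reached with probability `0`. -/
def avoid (P : Measure S → Measure (ℕ → S)) (B : Set S) : Set S :=
  {s | P (Measure.dirac s) (evF B) = 0}

/-- `T` is decisive w.r.t. `B` from `μ`. -/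
def Decisive (P : Measure S → Measure (ℕ → S)) (μ : Measure S) (B : Set S) : Prop :=
  P μ (evF B ∪ evF (avoid P B)) = 1

/-- `T` is strongly decisive w.r.t. `B` from `μ`. -/
def StronglyDecisive (P : Measure S → Measure (ℕ → S)) (μ : Measure S) (B : Set S) : Prop :=
  P μ (evGF B ∪ evF (avoid P B)) = 1

/-- `T` is persistently decisive w.r.t. `B` from `μ`. -/
def PersistentlyDecisive (P : Measure S → Measure (ℕ → S)) (μ : Measure S) (B : Set S) : Prop :=
  ∀ p : ℕ, P μ (evFge p B ∪ evFge p (avoid P B)) = 1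

/-- `PreProb(B)`: measurable sets `B'` from which `B` is reached in one step with positive
probability, whatever the initial distribution concentrated on `B'`. -/
def PreProb (P : Measure S → Measure (ℕ → S)) (B : Set S) : Set (Set S) :=
  {B' | MeasurableSet B' ∧ ∀ μ' : Measure S, IsProbabilityMeasure μ' → μ' B' = 1 →
    0 < P μ' {ρ | ρ 0 ∈ B' ∧ ρ 1 ∈ B}}

/-- `T` is fair w.r.t. `B` from `μ`. -/
def Fair (P : Measure S → Measure (ℕ → S)) (μ : Measure S) (B : Set S) : Prop :=
  ∀ B' ∈ PreProb P B, 0 < P μ (evGF B') →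
    P μ (evGF B ∩ evGF B') = P μ (evGF B')

/-- The one-step measure transformer `Ω_T`. -/
noncomputable def Omega (κ : Kernel S S) (μ : Measure S) : Measure S :=
  μ.bind (fun s => κ s)

/-- Two measures are qualitatively equivalent if they have the same null (measurable) sets. -/
def QualEquiv {T : Type*} [MeasurableSpace T] (μ ν : Measure T) : Prop :=
  ∀ A : Set T, MeasurableSet A → (μ A = 0 ↔ ν A = 0)

/-- `T₂ = (S₂,κ₂)` is an `α`-abstraction of `T₁ = (S₁,κ₁)`. -/
def IsAbstraction {S₁ S₂ : Type*} [MeasurableSpace S₁] [MeasurableSpace S₂]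
    (κ₁ : Kernel S₁ S₁) (κ₂ : Kernel S₂ S₂) (α : S₁ → S₂) : Prop :=
  ∀ μ : Measure S₁, IsProbabilityMeasure μ →
    QualEquiv (Measure.map α (Omega κ₁ μ)) (Omega κ₂ (Measure.map α μ))


theorem cylProb_meas {T : Type*} [MeasurableSpace T] (κ : Kernel S S) [IsMarkovKernel κ] (n : ℕ) :
    ∀ (η : Kernel T S) [IsSFiniteKernel η] (A : ℕ → Set S), (∀ i, MeasurableSet (A i)) →
      Measurable (fun t => cylProb κ n (η t) A) := by
  intro η _ A hA
  cases n with
  | zero => exact Kernel.measurable_coe η (hA 0)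
  | succ n =>
    have aux' : ∀ (n : ℕ) (A : ℕ → Set S), (∀ i, MeasurableSet (A i)) →
        Measurable (fun t => cylProb κ n (κ t) A) := by
      intro n
      induction n with
      | zero => intro A hA; exact Kernel.measurable_coe κ (hA 0)
      | succ n ih =>
        intro A hA
        exact Measurable.setLIntegral_kernel (ih _ (fun i => hA (i + 1))) (hA 0)
    exact Measurable.setLIntegral_kernel (aux' n _ (fun i => hA (i + 1))) (hA 0)

theorem cylProb_succ_eq_zero (κ : Kernel S S) [IsMarkovKernel κ] (n : ℕ) (μ : Measure S) (A : ℕ → Set S)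
    (hA : ∀ i, MeasurableSet (A i)) :
    cylProb κ (n + 1) μ A = 0 ↔
      ∀ᵐ s ∂μ, s ∈ A 0 → cylProb κ n (κ s) (fun i => A (i + 1)) = 0 := by
  have h := cylProb_meas κ n κ (fun i => A (i + 1)) (fun i => hA (i + 1))
  rw [cylProb, setLIntegral_eq_zero_iff (hA 0) h]

theorem cylProb_ac (κ : Kernel S S) [IsMarkovKernel κ] (n : ℕ) (μ ν : Measure S) (h : μ ≪ ν) (A : ℕ → Set S)
    (hA : ∀ i, MeasurableSet (A i)) (h0 : cylProb κ n ν A = 0) : cylProb κ n μ A = 0 := by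
  cases n with
  | zero => exact h h0
  | succ n =>
    rw [cylProb_succ_eq_zero _ _ _ _ hA] at h0 ⊢
    exact h.ae_le h0

theorem cylProb_map {S₁ S₂ : Type*} [MeasurableSpace S₁] [MeasurableSpace S₂]
    (κ₁ : Kernel S₁ S₁) [IsMarkovKernel κ₁] (κ₂ : Kernel S₂ S₂) [IsMarkovKernel κ₂]
    (α : S₁ → S₂) (hα : Measurable α) (habs : IsAbstraction κ₁ κ₂ α) (n : ℕ) :
    ∀ (μ : Measure S₁) (A : ℕ → Set S₂), (∀ i, MeasurableSet (A i)) →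
      (cylProb κ₁ n μ (fun i => α ⁻¹' A i) = 0 ↔ cylProb κ₂ n (μ.map α) A = 0) := by
  have key : ∀ s, QualEquiv ((κ₁ s).map α) (κ₂ (α s)) := by
    intro s
    have h := habs (Measure.dirac s) inferInstance
    rwa [Omega, Omega, Measure.map_dirac' hα, Measure.dirac_bind κ₁.measurable,
      Measure.dirac_bind κ₂.measurable] at h
  have ac1 : ∀ s, (κ₁ s).map α ≪ κ₂ (α s) := fun s =>
    Measure.AbsolutelyContinuous.mk fun A hA h => (key s A hA).2 h
  have ac2 : ∀ s, κ₂ (α s) ≪ (κ₁ s).map α := fun s =>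
    Measure.AbsolutelyContinuous.mk fun A hA h => (key s A hA).1 h
  induction n with
  | zero =>
    intro μ A hA
    rw [cylProb, cylProb, Measure.map_apply hα (hA 0)]
  | succ n ih =>
    intro μ A hA
    have hA' : ∀ i, MeasurableSet (A (i + 1)) := fun i => hA (i + 1)
    rw [cylProb_succ_eq_zero _ _ _ _ hA, cylProb_succ_eq_zero _ _ _ _ (fun i => hα (hA i)),
      ae_map_iff hα.aemeasurable]
    · refine Filter.eventually_congr (Filter.Eventually.of_forall fun s => ?_)
      refine imp_congr Iff.rfl ?_
      rw [ih (κ₁ s) (fun i => A (i + 1)) hA']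
      exact ⟨cylProb_ac _ _ _ _ (ac2 s) _ hA', cylProb_ac _ _ _ _ (ac1 s) _ hA'⟩
    · have h1 : MeasurableSet {s | cylProb κ₂ n (κ₂ s) (fun i => A (i + 1)) = 0} :=
        cylProb_meas κ₂ n κ₂ (fun i => A (i + 1)) hA' (measurableSet_singleton 0)
      exact (hA 0).imp h1

theorem cylProb_markov (κ : Kernel S S) [IsMarkovKernel κ] (m k : ℕ) :
    ∀ (μ : Measure S) (A : ℕ → Set S), (∀ i, MeasurableSet (A i)) →
      (∀ s ∈ A k, cylProb κ m (Measure.dirac s) (fun i => A (k + i)) = 0) →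
      cylProb κ (k + m) μ A = 0 := by
  induction k with
  | zero =>
    intro μ A hA h
    simp only [Nat.zero_add] at h ⊢
    cases m with
    | zero =>
      have : A 0 = ∅ := by
        ext s
        simp only [Set.mem_empty_iff_false, iff_false]
        intro hs
        have := h s hs
        rw [cylProb, Measure.dirac_apply' _ (hA 0)] at this
        simp [hs] at this
      rw [cylProb, this, measure_empty]
    | succ m =>
      rw [cylProb_succ_eq_zero _ _ _ _ hA]
      refine Filter.Eventually.of_forall fun s hs => ?_
      have h1 := h s hs
      rw [cylProb_succ_eq_zero _ _ _ _ hA] at h1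
      have h2 : MeasurableSet {s | cylProb κ m (κ s) (fun i => A (i + 1)) = 0} :=
        cylProb_meas κ m κ (fun i => A (i + 1)) (fun i => hA _) (measurableSet_singleton 0)
      exact (ae_dirac_iff ((hA 0).imp h2)).1 h1 hs
  | succ k ih =>
    intro μ A hA h
    rw [show k + 1 + m = (k + m) + 1 by omega, cylProb_succ_eq_zero _ _ _ _ hA]
    refine Filter.Eventually.of_forall fun s _ => ih _ _ (fun i => hA (i + 1)) fun s hs => ?_
    have := h s hs
    simpa only [show ∀ i, k + 1 + i = k + i + 1 by intro i; omega] using this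

theorem avoid_meas (κ : Kernel S S) [IsMarkovKernel κ]
    (P : Measure S → Measure (ℕ → S)) (hP : IsPathMeasure κ P) (B : Set S)
    (hB : MeasurableSet B) : MeasurableSet (avoid P B) := by
  classical
  have hm : ∀ n i : ℕ, MeasurableSet (if i = n then B else Set.univ) := by
    intro n i; split_ifs
    exacts [hB, MeasurableSet.univ]
  have : avoid P B = ⋂ n : ℕ, {s | cylProb κ n (Kernel.id s)
      (fun i => if i = n then B else Set.univ) = 0} := by
    ext s
    have h := (hP (Measure.dirac s) inferInstance).2
    have e : evF B = ⋃ n : ℕ, {ρ : ℕ → S | ∀ i ≤ n, ρ i ∈ (if i = n then B else Set.univ)} := by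
      ext ρ
      simp only [evF, Set.mem_ofPred_eq, Set.mem_iUnion]
      refine exists_congr fun n => ⟨fun hn i _ => ?_, fun hn => by simpa using hn n le_rfl⟩
      split_ifs with hi
      · rwa [hi]
      · trivial
    simp only [avoid, Set.mem_ofPred_eq, Set.mem_iInter, Kernel.id_apply]
    rw [e, measure_iUnion_null_iff]
    refine forall_congr' fun n => ?_
    rw [h n _ (hm n)]
  rw [this]
  exact MeasurableSet.iInter fun n =>
    cylProb_meas κ n Kernel.id _ (hm n) (measurableSet_singleton 0)

theorem evF_meas (B : Set S) (hB : MeasurableSet B) : MeasurableSet (evF B) := by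
  have : evF B = ⋃ n : ℕ, (fun ρ : ℕ → S => ρ n) ⁻¹' B := by
    ext ρ; simp [evF]
  rw [this]
  exact MeasurableSet.iUnion fun n => measurable_pi_apply n hB

/-- if `T₂` (an `α`-abstraction of `T₁`) is decisive from `α_# μ` w.r.t.
every measurable set, then the abstraction is `μ`-complete. -/
theorem statement_13 {S₁ S₂ : Type*} [MeasurableSpace S₁] [MeasurableSpace S₂]
    (κ₁ : Kernel S₁ S₁) [IsMarkovKernel κ₁] (κ₂ : Kernel S₂ S₂) [IsMarkovKernel κ₂]
    (P₁ : Measure S₁ → Measure (ℕ → S₁)) (hP₁ : IsPathMeasure κ₁ P₁)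
    (P₂ : Measure S₂ → Measure (ℕ → S₂)) (hP₂ : IsPathMeasure κ₂ P₂)
    (α : S₁ → S₂) (hα : Measurable α) (habs : IsAbstraction κ₁ κ₂ α)
    (μ : Measure S₁) (hμ : IsProbabilityMeasure μ)
    (hdec : ∀ B : Set S₂, MeasurableSet B → Decisive P₂ (μ.map α) B) :
    ∀ B : Set S₂, MeasurableSet B →
      P₁ μ (evF (α ⁻¹' B)) = 1 → P₂ (μ.map α) (evF B) = 1 := by
  classical
  intro B hB h1
  have hν : IsProbabilityMeasure (μ.map α) := Measure.isProbabilityMeasure_map hα.aemeasurable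
  have hp1 := (hP₁ μ hμ).1
  have hp2 := (hP₂ _ hν).1
  have hC := avoid_meas κ₂ P₂ hP₂ B hB
  have hd := hdec B hB
  rw [Decisive, ← prob_compl_eq_zero_iff ((evF_meas B hB).union (evF_meas _ hC))] at hd
  rw [← prob_compl_eq_zero_iff (evF_meas _ (hα hB))] at h1
  rw [← prob_compl_eq_zero_iff (evF_meas B hB)]
  let A : ℕ → ℕ → ℕ → Set S₂ := fun k m i =>
    if i = k then avoid P₂ B ∩ Bᶜ else if i < k then Bᶜ else if i = k + m then B else Set.univ
  have hA : ∀ k m i, MeasurableSet (A k m i) := by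
    intro k m i
    simp only [A]
    split_ifs
    exacts [hC.inter hB.compl, hB.compl, hB, MeasurableSet.univ]
  have s1 : ∀ k m, P₁ μ {ρ | ∀ i ≤ k + (m + 1), ρ i ∈ α ⁻¹' A k (m + 1) i} = 0 := by
    intro k m
    rw [(hP₁ μ hμ).2 _ (fun i => α ⁻¹' A k (m + 1) i) (fun i => hα (hA _ _ i)),
      cylProb_map κ₁ κ₂ α hα habs _ μ _ (hA k (m + 1))]
    refine cylProb_markov κ₂ (m + 1) k _ _ (hA k (m + 1)) fun s hs => ?_
    rw [← (hP₂ (Measure.dirac s) inferInstance).2 _ (fun i => A k (m + 1) (k + i))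
      (fun i => hA _ _ _)]
    have hs' : P₂ (Measure.dirac s) (evF B) = 0 := by
      simp only [A, if_true] at hs
      exact hs.1
    refine measure_mono_null ?_ hs'
    intro ρ hρ
    refine ⟨m + 1, ?_⟩
    have := hρ (m + 1) le_rfl
    simpa [A] using this
  have s2 : ∀ k, P₂ (μ.map α) {ρ | ∀ i ≤ k, ρ i ∈ A k 0 i} = 0 := by
    intro k
    rw [(hP₂ _ hν).2 _ _ (hA k 0), ← cylProb_map κ₁ κ₂ α hα habs _ μ _ (hA k 0),
      ← (hP₁ μ hμ).2 _ (fun i => α ⁻¹' A k 0 i) (fun i => hα (hA _ _ i))]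
    refine measure_mono_null (fun ρ hρ => ?_)
      (measure_union_null h1 (measure_iUnion_null (s1 k)))
    by_cases hF : ρ ∈ evF (α ⁻¹' B)
    · right
      obtain ⟨j, hj⟩ := hF
      have hkj : k < j := by
        by_contra hle
        have h3 := hρ j (not_lt.1 hle)
        simp only [A, Set.mem_preimage] at h3
        split_ifs at h3 with h4 h5
        · exact h3.2 hj
        · exact h3 hj
        all_goals omega
      obtain ⟨m, rfl⟩ : ∃ m, j = k + (m + 1) := ⟨j - k - 1, by omega⟩
      refine Set.mem_iUnion.2 ⟨m, fun i _ => ?_⟩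
      by_cases hik : i ≤ k
      · have h3 := hρ i hik
        simp only [A, Set.mem_preimage] at h3 ⊢
        rcases hik.eq_or_lt with h4 | h4
        · simpa [h4] using h3
        · simpa [h4, h4.ne] using h3
      · simp only [A, Set.mem_preimage]
        rw [if_neg (by omega), if_neg (by omega)]
        split_ifs with h4
        · rw [h4]; exact hj
        · trivial
    · exact Or.inl hF
  refine measure_mono_null (fun ρ hρ => ?_) (measure_union_null hd (measure_iUnion_null s2))
  by_cases hF : ρ ∈ evF (avoid P₂ B)
  · right
    obtain ⟨k, hk⟩ := hF
    have hb : ∀ i, ρ i ∈ Bᶜ := fun i hi => hρ ⟨i, hi⟩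
    refine Set.mem_iUnion.2 ⟨k, fun i hi => ?_⟩
    simp only [A]
    split_ifs with h4 h5 h6
    · rw [h4]; exact ⟨hk, hb k⟩
    · exact hb i
    · omega
    · trivial
  · left
    rintro (h | h)
    exacts [hρ h, hF h]

end STS
end

section
/- Let T = (S,2^S,κ,AP,L) be a labelled denumerable Markov chain (S countable) admitting a finite attractor, let M = (Q,q₀,E,𝓕) be a deterministic Muller automaton over AP, and let B be a finite attractor of the product T ⋉ M. Then for every initial probability measure μ on S, Prob^{T⋉M}_{μ ⊗ δ_{q₀}}({ρ | Inf(ρ) ∈ 𝓕}) = Σ_{C} Prob^{T⋉M}_{μ ⊗ δ_{q₀}}(F C), where the sum ranges over the BSCCs C of Graph(B) that are good for 𝓕 (i.e. F_C ∈ 𝓕). -/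
open MeasureTheory ProbabilityTheory ENNReal Filter Topology

namespace STS

variable {S : Type*} [MeasurableSpace S]

/-- One-step positive-probability relation `x → y` in a denumerable Markov chain. -/
def step {X : Type*} [MeasurableSpace X] (κ : Kernel X X) (x y : X) : Prop :=
  0 < κ x {y}

/-- `C` is a bottom strongly connected component (BSCC) of the graph `Graph(B)` whose
vertices are the elements of `B` and whose edges are given by `x →⁺ y` (existence of a
path in the chain): `C ⊆ B` is nonempty, strongly connected, and no edge leaves it. -/
def IsBSCC {X : Type*} [MeasurableSpace X] (κ : Kernel X X) (B C : Set X) : Prop :=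
  C ⊆ B ∧ C.Nonempty ∧
    (∀ x ∈ C, ∀ y ∈ C, Relation.TransGen (step κ) x y) ∧
    (∀ x ∈ C, ∀ y ∈ B, Relation.TransGen (step κ) x y → y ∈ C)

/-- `F_C`: the set of automaton locations reachable (by a path in the product chain)
from the BSCC `C`. -/
def FC {S Q : Type*} [MeasurableSpace (S × Q)] (κ : Kernel (S × Q) (S × Q))
    (C : Set (S × Q)) : Set Q :=
  {q | ∃ s : S, ∃ x ∈ C, Relation.ReflTransGen (step κ) x (s, q)}

/-- `Inf(ρ)`: the set of automaton locations visited infinitely often along `ρ`. -/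
def InfQ {S Q : Type*} (ρ : ℕ → S × Q) : Set Q :=
  {q | ∀ n, ∃ k, n ≤ k ∧ (ρ k).2 = q}

section Aux

variable {X : Type*} [MeasurableSpace X] [Countable X] [MeasurableSingletonClass X]

lemma cylProb_last (κ : Kernel X X) (x : X) :
    ∀ (n : ℕ) (μ : Measure X) (A : ℕ → Set X), A n = {x} →
      cylProb κ (n + 1) μ A = cylProb κ n μ A * κ x (A (n + 1))
  | 0, μ, A, h => by
    simp only [cylProb, h, zero_add]
    rw [lintegral_singleton, mul_comm]
  | n + 1, μ, A, h => by
    rw [cylProb]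
    simp_rw [cylProb_last κ x n _ (fun i => A (i + 1)) h]
    rw [lintegral_mul_const _ (measurable_of_countable _)]
    rfl

lemma cylProb_bind (κ : Kernel X X) (μ : Measure X) :
    ∀ (n : ℕ) (A : ℕ → Set X),
      cylProb κ n (μ.bind κ) A = ∫⁻ s, cylProb κ n (κ s) A ∂μ
  | 0, A => by
    simp only [cylProb]
    exact Measure.bind_apply (Set.to_countable _).measurableSet κ.measurable.aemeasurable
  | n + 1, A => by
    simp only [cylProb]
    have hA : MeasurableSet (A 0) := (Set.to_countable _).measurableSet
    rw [← lintegral_indicator hA, Measure.lintegral_bind κ.measurable.aemeasurable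
      (measurable_of_countable _).aemeasurable]
    simp_rw [lintegral_indicator hA]

lemma tendsto_cyl {κ : Kernel X X} {P : Measure X → Measure (ℕ → X)} (hP : IsPathMeasure κ P)
    (μ : Measure X) [IsProbabilityMeasure μ] (A : ℕ → Set X) :
    Tendsto (fun n => cylProb κ n μ A) atTop (𝓝 (P μ {ρ | ∀ i, ρ i ∈ A i})) := by
  obtain ⟨h1, h2⟩ := hP μ inferInstance
  have hA : ∀ i, MeasurableSet (A i) := fun i => (Set.to_countable _).measurableSet
  have he : {ρ : ℕ → X | ∀ i, ρ i ∈ A i} = ⋂ n, {ρ | ∀ i ≤ n, ρ i ∈ A i} := by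
    ext ρ
    simp only [Set.mem_ofPred_eq, Set.mem_iInter]
    exact ⟨fun h n i _ => h i, fun h i => h i i le_rfl⟩
  rw [he]
  simp_rw [← fun n => h2 n A hA]
  refine tendsto_measure_iInter_atTop ?_ ?_ ⟨0, measure_ne_top _ _⟩
  · intro n
    refine MeasurableSet.nullMeasurableSet ?_
    have : {ρ : ℕ → X | ∀ i ≤ n, ρ i ∈ A i} = ⋂ i, ⋂ (_ : i ≤ n), (fun ρ => ρ i) ⁻¹' A i := by
      ext; simp
    rw [this]
    exact MeasurableSet.iInter fun i => MeasurableSet.iInter fun _ => measurable_pi_apply i (hA i)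
  · intro m n hmn ρ hρ i hi
    exact hρ i (hi.trans hmn)

lemma avoid_shift {κ : Kernel X X} [IsMarkovKernel κ] {P : Measure X → Measure (ℕ → X)}
    (hP : IsPathMeasure κ P) (B : Set X)
    (hB : ∀ ν : Measure X, IsProbabilityMeasure ν → P ν (evF B) = 1) :
    ∀ (n : ℕ) (μ : Measure X), IsProbabilityMeasure μ →
      P μ {ρ | ∀ i, ρ i ∈ (if n ≤ i then Bᶜ else Set.univ)} = 0
  | 0, μ, hμ => by
    have h1 := (hP μ hμ).1
    have hm : MeasurableSet (evF B) := by
      have : evF B = ⋃ k, (fun ρ : ℕ → X => ρ k) ⁻¹' B := by ext; simp [evF]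
      rw [this]
      exact MeasurableSet.iUnion fun k =>
        measurable_pi_apply k (Set.to_countable _).measurableSet
    have := (prob_compl_eq_zero_iff hm).2 (hB μ hμ)
    convert this using 2
    ext ρ
    simp [evF]
  | n + 1, μ, hμ => by
    have hb : IsProbabilityMeasure (μ.bind κ) := inferInstance
    have h1 := tendsto_cyl hP μ (fun i => if n + 1 ≤ i then Bᶜ else Set.univ)
    have h2 := tendsto_cyl hP (μ.bind κ) (fun i => if n ≤ i then Bᶜ else Set.univ)
    rw [avoid_shift hP B hB n _ hb] at h2
    refine tendsto_nhds_unique ((tendsto_add_atTop_iff_nat 1).2 h1) ?_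
    convert h2 using 2 with m
    rw [cylProb_bind, cylProb]
    simp

lemma ae_io_attractor {κ : Kernel X X} [IsMarkovKernel κ] {P : Measure X → Measure (ℕ → X)}
    (hP : IsPathMeasure κ P) (B : Set X)
    (hB : ∀ ν : Measure X, IsProbabilityMeasure ν → P ν (evF B) = 1)
    (μ : Measure X) [hμ : IsProbabilityMeasure μ] :
    ∀ᵐ ρ ∂(P μ), ∀ n, ∃ k, n ≤ k ∧ ρ k ∈ B := by
  rw [ae_all_iff]
  intro n
  rw [ae_iff]
  convert avoid_shift hP B hB n μ hμ using 2
  ext ρ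
  simp only [Set.mem_ofPred_eq, not_exists, not_and]
  refine forall_congr' fun i => ?_
  by_cases h : n ≤ i <;> simp [h]

lemma path_last {κ : Kernel X X} {P : Measure X → Measure (ℕ → X)}
    (hP : IsPathMeasure κ P) (μ : Measure X) [hμ : IsProbabilityMeasure μ]
    (A : ℕ → Set X) (n : ℕ) (x y : X) :
    P μ {ρ | (∀ i ≤ n, ρ i ∈ A i) ∧ ρ n = x ∧ ρ (n + 1) = y} =
      P μ {ρ | (∀ i ≤ n, ρ i ∈ A i) ∧ ρ n = x} * κ x {y} := by
  obtain ⟨h1, h2⟩ := hP μ hμ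
  have hm : ∀ s : Set X, MeasurableSet s := fun s => (Set.to_countable _).measurableSet
  by_cases hx : x ∈ A n
  · let A' : ℕ → Set X := fun i => if i < n then A i else if i = n then {x} else {y}
    have e1 : {ρ : ℕ → X | (∀ i ≤ n, ρ i ∈ A i) ∧ ρ n = x ∧ ρ (n + 1) = y} =
        {ρ | ∀ i ≤ n + 1, ρ i ∈ A' i} := by
      ext ρ
      simp only [Set.mem_ofPred_eq, A']
      constructor
      · rintro ⟨h, h', h''⟩ i hi
        rcases lt_trichotomy i n with hin | rfl | hin
        · simp [hin, h i hin.le]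
        · simp [h']
        · obtain rfl : i = n + 1 := by omega
          simp [h'']
      · intro h
        have hn := h n (by omega)
        have hn1 := h (n + 1) le_rfl
        simp at hn hn1
        refine ⟨fun i hi => ?_, hn, hn1⟩
        rcases hi.lt_or_eq with hi | rfl
        · simpa [hi] using h i (by omega)
        · rwa [hn]
    have e2 : {ρ : ℕ → X | (∀ i ≤ n, ρ i ∈ A i) ∧ ρ n = x} =
        {ρ | ∀ i ≤ n, ρ i ∈ A' i} := by
      ext ρ
      simp only [Set.mem_ofPred_eq, A']
      constructor
      · rintro ⟨h, h'⟩ i hi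
        rcases hi.lt_or_eq with hin | rfl
        · simp [hin, h i hin.le]
        · simp [h']
      · intro h
        have hn := h n (by omega)
        simp at hn
        refine ⟨fun i hi => ?_, hn⟩
        rcases hi.lt_or_eq with hi | rfl
        · simpa [hi] using h i (by omega)
        · rwa [hn]
    rw [e1, e2, h2 _ _ fun i => hm _, h2 _ _ fun i => hm _,
      cylProb_last κ x n μ A' (by simp [A'])]
    simp [A']
  · have e1 : {ρ : ℕ → X | (∀ i ≤ n, ρ i ∈ A i) ∧ ρ n = x ∧ ρ (n + 1) = y} = ∅ := by
      ext ρ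
      simp only [Set.mem_ofPred_eq, Set.mem_empty_iff_false, iff_false]
      rintro ⟨h, rfl, _⟩
      exact hx (h n le_rfl)
    have e2 : {ρ : ℕ → X | (∀ i ≤ n, ρ i ∈ A i) ∧ ρ n = x} = ∅ := by
      ext ρ
      simp only [Set.mem_ofPred_eq, Set.mem_empty_iff_false, iff_false]
      rintro ⟨h, rfl⟩
      exact hx (h n le_rfl)
    simp [e1, e2]

lemma ae_step {κ : Kernel X X} {P : Measure X → Measure (ℕ → X)}
    (hP : IsPathMeasure κ P) (μ : Measure X) [hμ : IsProbabilityMeasure μ] :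
    ∀ᵐ ρ ∂(P μ), ∀ n, step κ (ρ n) (ρ (n + 1)) := by
  have : ∀ᵐ ρ ∂(P μ), ∀ n x y, κ x {y} = 0 → ¬ (ρ n = x ∧ ρ (n + 1) = y) := by
    simp_rw [ae_all_iff]
    intro n x y h
    have := path_last hP μ (fun _ => Set.univ) n x y
    rw [h, mul_zero] at this
    rw [ae_iff]
    simpa using this
  filter_upwards [this] with ρ h n
  rw [step, pos_iff_ne_zero]
  intro h0
  exact h n _ _ h0 ⟨rfl, rfl⟩

lemma meas_coord (n : ℕ) (x : X) : MeasurableSet {ρ : ℕ → X | ρ n = x} := by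
  have : {ρ : ℕ → X | ρ n = x} = (fun ρ => ρ n) ⁻¹' {x} := by ext; simp
  rw [this]
  exact measurable_pi_apply n (measurableSet_singleton x)

lemma markov_set {κ : Kernel X X} {P : Measure X → Measure (ℕ → X)}
    (hP : IsPathMeasure κ P) (μ : Measure X) [hμ : IsProbabilityMeasure μ]
    (n : ℕ) (x y : X) (D : Set (ℕ → X))
    (hD : MeasurableSet[Filtration.piLE (X := fun _ : ℕ => X) n] D) :
    P μ ({ρ | ρ n = x ∧ ρ (n + 1) = y} ∩ D) = κ x {y} * P μ ({ρ | ρ n = x} ∩ D) := by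
  obtain ⟨h1, h2⟩ := hP μ hμ
  rw [Filtration.piLE_eq_comap_frestrictLe] at hD
  obtain ⟨T, hT, rfl⟩ := hD
  have hf : Measurable (Preorder.frestrictLe (π := fun _ : ℕ => X) n) :=
    Preorder.measurable_frestrictLe n
  have key : ((P μ).restrict {ρ | ρ n = x ∧ ρ (n + 1) = y}).map
        (Preorder.frestrictLe (π := fun _ : ℕ => X) n) =
      (κ x {y}) • ((P μ).restrict {ρ | ρ n = x}).map
        (Preorder.frestrictLe (π := fun _ : ℕ => X) n) := by
    refine Measure.ext_of_singleton fun a => ?_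
    have hs : MeasurableSet ({a} : Set ((i : Finset.Iic n) → X)) := measurableSet_singleton a
    rw [Measure.smul_apply, Measure.map_apply hf hs, Measure.map_apply hf hs,
      Measure.restrict_apply (hf hs), Measure.restrict_apply (hf hs), smul_eq_mul]
    have := path_last hP μ
      (fun i => if h : i ∈ Finset.Iic n then {a ⟨i, h⟩} else Set.univ) n x y
    rw [mul_comm]
    have hfa : ∀ ρ : ℕ → X, (∀ i ≤ n, ρ i ∈ (if h : i ∈ Finset.Iic n then {a ⟨i, h⟩} else Set.univ
        : Set X)) ↔ ρ ∈ Preorder.frestrictLe (π := fun _ : ℕ => X) n ⁻¹' {a} := by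
      intro ρ
      simp only [Set.mem_preimage, Set.mem_singleton_iff, funext_iff, Preorder.frestrictLe_apply,
        Subtype.forall]
      refine forall_congr' fun i => ?_
      by_cases hi : i ≤ n
      · simp [hi]
      · simp [hi]
    simp_rw [hfa] at this
    exact this
  have h := congrArg (fun m => m T) key
  simp only [Measure.smul_apply, smul_eq_mul] at h
  rw [Measure.map_apply hf hT, Measure.map_apply hf hT,
    Measure.restrict_apply (hf hT), Measure.restrict_apply (hf hT)] at h
  rwa [Set.inter_comm, Set.inter_comm {ρ : ℕ → X | ρ n = x}]

lemma meas_coord_piLE {n k : ℕ} (hk : k ≤ n) (x : X) :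
    MeasurableSet[Filtration.piLE (X := fun _ : ℕ => X) n] {ρ : ℕ → X | ρ k = x} := by
  rw [Filtration.piLE_eq_comap_frestrictLe]
  refine ⟨(fun a => a ⟨k, by simpa using hk⟩) ⁻¹' {x},
    measurable_pi_apply (X := fun _ : Finset.Iic n => X) _ (measurableSet_singleton x), ?_⟩
  ext ρ
  simp

lemma ae_io_step {κ : Kernel X X} [IsMarkovKernel κ] {P : Measure X → Measure (ℕ → X)}
    (hP : IsPathMeasure κ P) (μ : Measure X) [hμ : IsProbabilityMeasure μ]
    (x y : X) (hxy : step κ x y) :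
    ∀ᵐ ρ ∂(P μ), (∀ n, ∃ k, n ≤ k ∧ ρ k = x) → (∀ n, ∃ k, n ≤ k ∧ ρ k = y) := by
  obtain ⟨h1, h2⟩ := hP μ hμ
  let s : ℕ → Set (ℕ → X) := fun n => {ρ | ρ (n - 1) = x} ∩ {ρ | ρ n = y}
  have hs : ∀ n, MeasurableSet[Filtration.piLE (X := fun _ : ℕ => X) n] (s n) := fun n =>
    MeasurableSet.inter (meas_coord_piLE (by omega) x) (meas_coord_piLE le_rfl y)
  have hs' : ∀ n, MeasurableSet (s n) := fun n => (meas_coord _ x).inter (meas_coord _ y)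
  have hbc := ae_mem_limsup_atTop_iff (P μ) hs
  have hce : ∀ᵐ ρ ∂(P μ), ∀ k, ({ρ : ℕ → X | ρ k = x}.indicator
        (fun _ => (κ x).real {y}) : (ℕ → X) → ℝ) ρ =
      ((P μ)[(s (k + 1)).indicator (1 : (ℕ → X) → ℝ) |
        (Filtration.piLE (X := fun _ : ℕ => X) k)]) ρ := by
    rw [ae_all_iff]
    intro k
    have hi : Integrable ((s (k + 1)).indicator (1 : (ℕ → X) → ℝ)) (P μ) :=
      (integrable_const (1 : ℝ)).indicator (hs' _)
    have hj : Integrable ({ρ : ℕ → X | ρ k = x}.indicator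
        (fun _ => (κ x).real {y}) : (ℕ → X) → ℝ) (P μ) :=
      (integrable_const _).indicator (meas_coord k x)
    refine ae_eq_condExp_of_forall_setIntegral_eq (Filtration.le _ k) hi
      (fun _ _ _ => hj.integrableOn) ?_ ?_
    · intro D hD _
      have hm := markov_set hP μ k x y D hD
      rw [setIntegral_indicator (meas_coord k x)]
      have : (s (k + 1)).indicator (1 : (ℕ → X) → ℝ) = (s (k + 1)).indicator (fun _ => (1 : ℝ)) :=
        rfl
      rw [this, setIntegral_indicator (hs' (k + 1)), setIntegral_const, setIntegral_const,
        smul_eq_mul, smul_eq_mul, mul_one, Set.inter_comm D, Set.inter_comm D]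
      have e : s (k + 1) = {ρ | ρ k = x ∧ ρ (k + 1) = y} := by
        ext; simp [s]
      rw [e, measureReal_def, measureReal_def, measureReal_def, hm, ENNReal.toReal_mul, mul_comm]
    · refine StronglyMeasurable.aestronglyMeasurable ?_
      exact stronglyMeasurable_const.indicator (meas_coord_piLE le_rfl x)
  filter_upwards [hbc, hce] with ρ hρ1 hρ2 hio
  have hp : 0 < (κ x).real {y} := by
    rw [measureReal_def]
    exact ENNReal.toReal_pos hxy.ne' (measure_ne_top _ _)
  have hlim : ρ ∈ limsup (fun n : ℕ => {ρ : ℕ → X | ρ n = x}) atTop := by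
    rw [mem_limsup_iff_frequently_mem, Filter.frequently_atTop]
    exact fun n => hio n
  rw [Set.limsup_eq_tendsto_sum_indicator_atTop hp] at hlim
  have hmem : ρ ∈ limsup s atTop := by
    rw [hρ1]
    simp_rw [← hρ2]
    exact hlim
  rw [mem_limsup_iff_frequently_mem, Filter.frequently_atTop] at hmem
  intro n
  obtain ⟨k, hk, hk2⟩ := hmem n
  exact ⟨k, hk, hk2.2⟩

/-- Almost sure good behaviour of paths. -/
structure GoodPath (κ : Kernel X X) (B : Set X) (ρ : ℕ → X) : Prop where
  steps : ∀ n, step κ (ρ n) (ρ (n + 1))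
  attr : ∃ x ∈ B, ∀ n, ∃ k, n ≤ k ∧ ρ k = x
  io : ∀ x y, step κ x y → (∀ n, ∃ k, n ≤ k ∧ ρ k = x) → (∀ n, ∃ k, n ≤ k ∧ ρ k = y)

lemma ae_goodPath {κ : Kernel X X} [IsMarkovKernel κ] {P : Measure X → Measure (ℕ → X)}
    (hP : IsPathMeasure κ P) (B : Set X) (hBfin : B.Finite)
    (hB : ∀ ν : Measure X, IsProbabilityMeasure ν → P ν (evF B) = 1)
    (μ : Measure X) [hμ : IsProbabilityMeasure μ] :
    ∀ᵐ ρ ∂(P μ), GoodPath κ B ρ := by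
  have h3 : ∀ᵐ ρ ∂(P μ), ∀ x y, step κ x y →
      (∀ n, ∃ k, n ≤ k ∧ ρ k = x) → (∀ n, ∃ k, n ≤ k ∧ ρ k = y) := by
    simp_rw [ae_all_iff]
    exact fun x y h => ae_io_step hP μ x y h
  filter_upwards [ae_step hP μ, ae_io_attractor hP B hB μ, h3] with ρ h1 h2 h3
  refine ⟨h1, ?_, h3⟩
  by_contra! hcon
  choose! N hN using hcon
  obtain ⟨M, hM⟩ := (hBfin.image N).bddAbove
  obtain ⟨k, hk, hkB⟩ := h2 M
  exact hN _ hkB k ((hM (Set.mem_image_of_mem N hkB)).trans hk) rfl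


lemma GoodPath.trans {κ : Kernel X X} {B : Set X} {ρ : ℕ → X} (h : GoodPath κ B ρ) {m n : ℕ}
    (hmn : m < n) : Relation.TransGen (step κ) (ρ m) (ρ n) := by
  induction n, hmn using Nat.le_induction with
  | base => exact .single (h.steps m)
  | succ n _ ih => exact ih.tail (h.steps n)

lemma GoodPath.io_refl {κ : Kernel X X} {B : Set X} {ρ : ℕ → X} (h : GoodPath κ B ρ) {x y : X}
    (hxy : Relation.ReflTransGen (step κ) x y) (hx : ∀ n, ∃ k, n ≤ k ∧ ρ k = x) :
    ∀ n, ∃ k, n ≤ k ∧ ρ k = y := by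
  induction hxy with
  | refl => exact hx
  | tail _ hs ih => exact h.io _ _ hs ih

/-- On a good path there is a unique BSCC that is reached. -/
lemma GoodPath.exists_bscc {κ : Kernel X X} {B : Set X} {ρ : ℕ → X} (h : GoodPath κ B ρ) :
    ∃ C x, x ∈ C ∧ (∀ n, ∃ k, n ≤ k ∧ ρ k = x) ∧ IsBSCC κ B C ∧ ρ ∈ evF C ∧
      ∀ C', IsBSCC κ B C' → ρ ∈ evF C' → C' = C := by
  obtain ⟨x, hxB, hx⟩ := h.attr
  have reach : ∀ y, (∃ k, ρ k = y) → Relation.TransGen (step κ) y x := by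
    rintro y ⟨k, rfl⟩
    obtain ⟨m, hm, rfl⟩ := hx (k + 1)
    exact h.trans hm
  have back : ∀ y, Relation.TransGen (step κ) x y → Relation.TransGen (step κ) y x := by
    intro y hy
    obtain ⟨k, _, hk⟩ := h.io_refl hy.to_reflTransGen hx 0
    exact reach y ⟨k, hk⟩
  obtain ⟨k0, _, hk0⟩ := hx 0
  have hxx := reach x ⟨k0, hk0⟩
  refine ⟨{y | y ∈ B ∧ Relation.TransGen (step κ) x y}, x, ⟨hxB, hxx⟩, hx,
    ⟨fun y hy => hy.1, ⟨x, hxB, hxx⟩, fun y hy z hz => (back y hy.2).trans hz.2,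
      fun y hy z hz hyz => ⟨hz, hy.2.trans hyz⟩⟩, ⟨k0, by rw [hk0]; exact ⟨hxB, hxx⟩⟩, ?_⟩
  rintro C' ⟨hsub, -, hsc, hbot⟩ ⟨k, hk⟩
  have hxC : x ∈ C' := hbot _ hk x hxB (reach _ ⟨k, rfl⟩)
  ext y
  exact ⟨fun hy => ⟨hsub hy, hsc x hxC y hy⟩, fun hy => hbot x hxC y hy.1 hy.2⟩

end Aux

lemma GoodPath.infQ_eq {S Q : Type*} [MeasurableSpace (S × Q)] [Countable (S × Q)]
    [MeasurableSingletonClass (S × Q)] {κ : Kernel (S × Q) (S × Q)} {B C : Set (S × Q)} {ρ : ℕ → S × Q} (h : GoodPath κ B ρ)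
    {x : S × Q} (hxC : x ∈ C) (hC : IsBSCC κ B C) (hx : ∀ n, ∃ k, n ≤ k ∧ ρ k = x) :
    InfQ ρ = FC κ C := by
  ext q
  constructor
  · intro hq
    obtain ⟨k, _, rfl⟩ := hx 0
    obtain ⟨m, hm, rfl⟩ := hq (k + 1)
    exact ⟨(ρ m).1, ρ k, hxC, (h.trans hm).to_reflTransGen⟩
  · rintro ⟨s, y, hy, hyq⟩ n
    obtain ⟨k, hk, hk2⟩ :=
      h.io_refl ((hC.2.2.1 x hxC y hy).to_reflTransGen.trans hyq) hx n
    exact ⟨k, hk, by rw [hk2]⟩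

/-- for a labelled denumerable Markov chain `T` with a finite attractor and a
deterministic Muller automaton `M = (Q, q₀, E, 𝓕)`, if `B` is a finite attractor of the
product `T ⋉ M`, then for every initial probability measure `μ`, the probability that
`Inf(ρ) ∈ 𝓕` equals the sum, over the BSCCs `C` of `Graph(B)` that are good for `𝓕`
(i.e. `F_C ∈ 𝓕`), of the probability of reaching `C`. -/
theorem statement_16 {S : Type*} [MeasurableSpace S] [Countable S] [MeasurableSingletonClass S]
    {AP : Type*} [Finite AP]
    {Q : Type*} [Finite Q] [MeasurableSpace Q] [MeasurableSingletonClass Q]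
    -- the labelled DMC `T = (S, 2^S, κ, AP, L)` with path measures `P`
    (κ : Kernel S S) [IsMarkovKernel κ]
    (P : Measure S → Measure (ℕ → S)) (hP : IsPathMeasure κ P)
    (L : S → Set AP)
    -- the deterministic Muller automaton `M = (Q, q₀, E, 𝓕)`
    (q₀ : Q) (E : Set (Q × Set AP × Q)) (𝓕 : Set (Set Q))
    (hdet : ∀ q u q₁ q₂, (q, u, q₁) ∈ E → (q, u, q₂) ∈ E → q₁ = q₂)
    (hcomp : ∀ q u, ∃ q', (q, u, q') ∈ E)
    -- the product DMC `T ⋉ M` on `S × Q`, with path measures `P'`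
    (κ' : Kernel (S × Q) (S × Q)) [IsMarkovKernel κ']
    (hκ'mem : ∀ (s : S) (q : Q) (s' : S) (q' : Q),
      (q, L s, q') ∈ E → κ' (s, q) {(s', q')} = κ s {s'})
    (hκ'nmem : ∀ (s : S) (q : Q) (s' : S) (q' : Q),
      (q, L s, q') ∉ E → κ' (s, q) {(s', q')} = 0)
    (P' : Measure (S × Q) → Measure (ℕ → S × Q)) (hP' : IsPathMeasure κ' P')
    -- `T` admits a finite attractor
    (hTattr : ∃ A : Set S, A.Finite ∧
      ∀ μ : Measure S, IsProbabilityMeasure μ → P μ (evF A) = 1)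
    -- `B` is a finite attractor of the product `T ⋉ M`
    (B : Set (S × Q)) (hBfin : B.Finite)
    (hBattr : ∀ ν : Measure (S × Q), IsProbabilityMeasure ν → P' ν (evF B) = 1) :
    ∀ μ : Measure S, IsProbabilityMeasure μ →
      P' (μ.prod (Measure.dirac q₀)) {ρ : ℕ → S × Q | InfQ ρ ∈ 𝓕} =
        ∑' C : {C : Set (S × Q) // IsBSCC κ' B C ∧ FC κ' C ∈ 𝓕},
          P' (μ.prod (Measure.dirac q₀)) (evF (C : Set (S × Q))) := by
  intro μ hμ
  have hg := ae_goodPath hP' B hBfin hBattr (μ.prod (Measure.dirac q₀))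
  have hfin : Finite {C : Set (S × Q) // IsBSCC κ' B C ∧ FC κ' C ∈ 𝓕} :=
    (hBfin.finite_subsets.subset fun C hC => hC.1.1).to_subtype
  rw [← measure_iUnion₀]
  · refine measure_congr ?_
    filter_upwards [hg] with ρ hρ
    obtain ⟨C, x, hxC, hx, hC, hCρ, huniq⟩ := hρ.exists_bscc
    refine propext ?_
    change InfQ ρ ∈ 𝓕 ↔ ρ ∈ ⋃ C : {C : Set (S × Q) // IsBSCC κ' B C ∧ FC κ' C ∈ 𝓕},
      evF (C : Set (S × Q))
    rw [hρ.infQ_eq hxC hC hx, Set.mem_iUnion]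
    constructor
    · exact fun h => ⟨⟨C, hC, h⟩, hCρ⟩
    · rintro ⟨⟨C', hC', hF⟩, h⟩
      rwa [← huniq C' hC' h]
  · intro C D hCD
    rw [Function.onFun, AEDisjoint]
    refine measure_eq_zero_iff_ae_notMem.2 ?_
    filter_upwards [hg] with ρ hρ hmem
    obtain ⟨C0, x, hxC, hx, hC, hCρ, huniq⟩ := hρ.exists_bscc
    exact hCD (Subtype.ext ((huniq C C.2.1 hmem.1).trans (huniq D D.2.1 hmem.2).symm))
  · intro C
    refine MeasurableSet.nullMeasurableSet ?_
    have : evF (C : Set (S × Q)) = ⋃ k, (fun ρ : ℕ → S × Q => ρ k) ⁻¹' C := by ext; simp [evF]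
    rw [this]
    exact MeasurableSet.iUnion fun k =>
      measurable_pi_apply k (Set.to_countable _).measurableSet

end STS
end
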